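/- Up to isometries of ℝ², there are exactly four cyclic lattice equable quadrilaterals. Every lattice equable quadrilateral whose four vertices lie on a common circle can be mapped by an isometry of ℝ² onto one of: the square with vertices (0,0), (4,0), (4,4), (0,4); the rectangle with vertices (0,0), (6,0), (6,3), (0,3); the isosceles trapezoid with vertices (0,0), (8,0), (5,4), (3,4); the isosceles trapezoid with vertices (0,0), (14,0), (10,3), (4,3). -/

import Mathlib

noncomputable section

/-- Euclidean distance between two points of `ℝ × ℝ`. -/
def dist2 (p q : ℝ × ℝ) : ℝ := Real.sqrt ((p.1 - q.1) ^ 2 + (p.2 - q.2) ^ 2)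

/-- Signed cross product of the vectors `q - p` and `r - p`. -/
def cross (p q r : ℝ × ℝ) : ℝ :=
  (q.1 - p.1) * (r.2 - p.2) - (q.2 - p.2) * (r.1 - p.1)

/-- Three points are collinear. -/
def Collinear3 (p q r : ℝ × ℝ) : Prop := cross p q r = 0

/-- Dot product on `ℝ × ℝ`. -/
def dot2 (p q : ℝ × ℝ) : ℝ := p.1 * q.1 + p.2 * q.2

/-- Closed segment between two points. -/
def Seg (p q : ℝ × ℝ) : Set (ℝ × ℝ) :=
  {x | ∃ t : ℝ, 0 ≤ t ∧ t ≤ 1 ∧ x = (1 - t) • p + t • q}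

/-- Twice the signed (shoelace) area of the quadrilateral `O A B C`. -/
def shoelace (O A B C : ℝ × ℝ) : ℝ :=
  (O.1 * A.2 - A.1 * O.2) + (A.1 * B.2 - B.1 * A.2) +
    (B.1 * C.2 - C.1 * B.2) + (C.1 * O.2 - O.1 * C.2)

/-- Area of the (simple) quadrilateral `O A B C`, by the shoelace formula. -/
def quadArea (O A B C : ℝ × ℝ) : ℝ := |shoelace O A B C| / 2

/-- Perimeter of the quadrilateral `O A B C`. -/
def quadPerim (O A B C : ℝ × ℝ) : ℝ :=
  dist2 O A + dist2 A B + dist2 B C + dist2 C O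

/-- Simple quadrilateral: no three vertices collinear, and the four closed sides
intersect only at shared endpoints. -/
def IsSimpleQuad (O A B C : ℝ × ℝ) : Prop :=
  ¬ Collinear3 O A B ∧ ¬ Collinear3 A B C ∧ ¬ Collinear3 B C O ∧ ¬ Collinear3 C O A ∧
  Seg O A ∩ Seg B C = ∅ ∧ Seg A B ∩ Seg C O = ∅ ∧
  Seg O A ∩ Seg A B = {A} ∧ Seg A B ∩ Seg B C = {B} ∧
  Seg B C ∩ Seg C O = {C} ∧ Seg C O ∩ Seg O A = {O}

/-- Quadrilateral `O A B C`: simple, with vertices in counterclockwise order. -/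
def IsQuad (O A B C : ℝ × ℝ) : Prop :=
  IsSimpleQuad O A B C ∧ 0 < shoelace O A B C

/-- A point of `ℝ × ℝ` with integer coordinates. -/
def IsLatticePt (p : ℝ × ℝ) : Prop := ∃ m n : ℤ, p = ((m : ℝ), (n : ℝ))

/-- An isometry of the Euclidean plane `ℝ × ℝ`. -/
def IsIsometry2 (f : ℝ × ℝ → ℝ × ℝ) : Prop :=
  Function.Bijective f ∧ ∀ p q, dist2 (f p) (f q) = dist2 p q

/-- The four vertices are in convex position: no vertex lies in the convex hull
of the other three. -/
def ConvexPos (O A B C : ℝ × ℝ) : Prop :=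
  O ∉ convexHull ℝ ({A, B, C} : Set (ℝ × ℝ)) ∧
  A ∉ convexHull ℝ ({O, B, C} : Set (ℝ × ℝ)) ∧
  B ∉ convexHull ℝ ({O, A, C} : Set (ℝ × ℝ)) ∧
  C ∉ convexHull ℝ ({O, A, B} : Set (ℝ × ℝ))

/-- The segment `pq` is parallel to the segment `rs`. -/
def Para (p q r s : ℝ × ℝ) : Prop :=
  (q.1 - p.1) * (s.2 - r.2) - (q.2 - p.2) * (s.1 - r.1) = 0

/-- Area of the triangle `p q r`. -/
def triArea (p q r : ℝ × ℝ) : ℝ := |cross p q r| / 2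

/-- Heron's formula: area of a triangle with side lengths `p`, `q`, `r`. -/
def heronArea (p q r : ℝ) : ℝ :=
  Real.sqrt ((p + q + r) * (-p + q + r) * (p - q + r) * (p + q - r)) / 4

end

/-!
The side lengths of a lattice quadrilateral are square roots of integers and, for an equable one,
their sum is half an integer. A Galois conjugation sends each of them to a number of the same
absolute value and fixes the sum, so by the triangle inequality it fixes each of them: the sides
are integers. A cyclic quadrilateral is determined by its sides `a`, `b`, `c`, `d`, and by
Brahmagupta's formula equability reads
`(b + c + d - a) (a + c + d - b) (a + b + d - c) (a + b + c - d) = 16 (a + b + c + d) ^ 2`. Up to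
order this has four solutions; the integrality of the cross products at the vertices of the longest
side then forces the other two sides at these vertices to be equal.
-/

/-! ### Sums of radicals -/

theorem norm_algEquiv_eq_of_pow_eq_ratCast {n : ℕ} (hn : n ≠ 0) {x : algebraicClosure ℚ ℂ} {q : ℚ}
    (hx : x ^ n = q) (σ : algebraicClosure ℚ ℂ ≃ₐ[ℚ] algebraicClosure ℚ ℂ) :
    ‖(σ x : ℂ)‖ = ‖(x : ℂ)‖ := by
  have hσ : (σ x : ℂ) ^ n = (x : ℂ) ^ n := by
    exact_mod_cast congrArg Subtype.val (show σ x ^ n = x ^ n by rw [← map_pow, hx, map_ratCast])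
  exact (pow_left_inj₀ (norm_nonneg _) (norm_nonneg _) hn).1 (by simp only [← norm_pow, hσ])

theorem eq_norm_of_sum_eq_sum_norm {ι : Type*} {s : Finset ι} {z : ι → ℂ}
    (h : ∑ i ∈ s, z i = ∑ i ∈ s, (‖z i‖ : ℂ)) {i : ι} (hi : i ∈ s) : z i = ‖z i‖ := by
  have hre : ∀ j ∈ s, (z j).re = ‖z j‖ := by
    refine (Finset.sum_eq_sum_iff_of_le fun j _ ↦ Complex.re_le_norm _).1 ?_
    simpa only [Complex.re_sum, Complex.ofReal_re] using congrArg Complex.re h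
  have hsq := Complex.sq_norm_sub_sq_re (z i)
  rw [hre i hi, sub_self, eq_comm, sq_eq_zero_iff] at hsq
  exact Complex.ext (hre i hi) hsq

theorem mem_range_ratCast_of_sum_mem_range {ι : Type*} [Fintype ι] {x : ι → ℝ} {n : ι → ℕ}
    (hn : ∀ i, n i ≠ 0) (hx : ∀ i, 0 ≤ x i)
    (hpow : ∀ i, x i ^ n i ∈ Set.range ((↑) : ℚ → ℝ))
    (hsum : ∑ i, x i ∈ Set.range ((↑) : ℚ → ℝ)) (i : ι) :
    x i ∈ Set.range ((↑) : ℚ → ℝ) := by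
  choose q hq using hpow
  obtain ⟨r, hr⟩ := hsum
  have hqC (i) : (x i : ℂ) ^ n i = q i := by rw [← Complex.ofReal_pow, ← hq, Complex.ofReal_ratCast]
  have hmem (i) : (x i : ℂ) ∈ algebraicClosure ℚ ℂ :=
    mem_algebraicClosure_iff.2 <| .of_pow (Nat.pos_of_ne_zero (hn i)) <|
      hqC i ▸ isAlgebraic_algebraMap (q i)
  let y (i : ι) : algebraicClosure ℚ ℂ := ⟨x i, hmem i⟩
  have hy (i) : y i ^ n i = q i := Subtype.ext (hqC i)
  have hysum : ∑ i, y i = r := by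
    refine Subtype.ext ((IntermediateField.coe_sum _ _).trans ?_)
    exact (Complex.ofReal_sum _ _).symm.trans (hr ▸ Complex.ofReal_ratCast r)
  have : IsAlgClosure ℚ (algebraicClosure ℚ ℂ) := algebraicClosure.isAlgClosure ℚ ℂ
  have : IsGalois ℚ (algebraicClosure ℚ ℂ) := IsAlgClosure.isGalois ℚ _
  suffices ∀ σ : algebraicClosure ℚ ℂ ≃ₐ[ℚ] algebraicClosure ℚ ℂ, σ (y i) = y i by
    obtain ⟨s, hs⟩ := IntermediateField.mem_bot.1 ((InfiniteGalois.mem_bot_iff_fixed (y i)).2 this)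
    have hs' : (s : ℂ) = x i := congrArg Subtype.val hs
    exact ⟨s, by exact_mod_cast hs'⟩
  intro σ
  have hnorm (j) : (‖(σ (y j) : ℂ)‖ : ℂ) = x j := by
    rw [norm_algEquiv_eq_of_pow_eq_ratCast (hn j) (hy j), Complex.norm_of_nonneg (hx j)]
  have hfix : ∑ j, (σ (y j) : ℂ) = ∑ j, (‖(σ (y j) : ℂ)‖ : ℂ) := by
    have hσ : ∑ j, σ (y j) = ∑ j, y j := by rw [← map_sum, hysum, map_ratCast]
    simpa only [hnorm, IntermediateField.coe_sum] using congrArg Subtype.val hσ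
  exact Subtype.ext ((eq_norm_of_sum_eq_sum_norm hfix (Finset.mem_univ i)).trans (hnorm i))

theorem mem_range_intCast_of_sum_mem_range {ι : Type*} [Fintype ι] {x : ι → ℝ} {n : ι → ℕ}
    (hn : ∀ i, n i ≠ 0) (hx : ∀ i, 0 ≤ x i)
    (hpow : ∀ i, x i ^ n i ∈ Set.range ((↑) : ℤ → ℝ))
    (hsum : ∑ i, x i ∈ Set.range ((↑) : ℚ → ℝ)) (i : ι) :
    x i ∈ Set.range ((↑) : ℤ → ℝ) := by
  have hrat : x i ∈ Set.range ((↑) : ℚ → ℝ) := by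
    refine mem_range_ratCast_of_sum_mem_range hn hx (fun j ↦ ?_) hsum i
    obtain ⟨m, hm⟩ := hpow j
    exact ⟨m, by exact_mod_cast hm⟩
  obtain ⟨m, hm⟩ := hpow i
  by_contra hint
  exact irrational_nrt_of_notint_nrt (n i) m hm.symm (fun ⟨k, hk⟩ ↦ hint ⟨k, hk.symm⟩)
    (Nat.pos_of_ne_zero (hn i)) hrat

/-! ### The Diophantine equation -/

-- `(w + σ) ^ 2 / w` is decreasing in `w` for `w ≤ σ = x + y + z`; compare `w` with `x`.
theorem sq_mul_le_of_mul_eq_sum_sq {w x y z : ℤ} (hx : 0 < x) (hyz : 0 ≤ y + z) (hxw : x ≤ w)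
    (hw : w ≤ x + y + z) (h : w * x * y * z = (w + x + y + z) ^ 2) :
    x ^ 2 * (y * z) ≤ (2 * x + y + z) ^ 2 := by
  have : 0 ≤ (w - x) * ((x + y + z) ^ 2 - w * x) := mul_nonneg (by linarith) (by nlinarith)
  refine le_of_mul_le_mul_left ?_ (hx.trans_le hxw)
  linear_combination this + x * h

theorem bounds_of_mul_eq_sum_sq {w x y z : ℤ} (hz : 0 < z) (hzy : z ≤ y) (hyx : y ≤ x)
    (hxw : x ≤ w) (hw : w < x + y + z) (h : w * x * y * z = (w + x + y + z) ^ 2) :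
    y * z ≤ 16 ∧ x ≤ 25 := by
  have hw₀ : 0 < w := by linarith
  have hx₀ : 0 < x := by linarith
  have hle : x ^ 2 * (y * z) ≤ (2 * x + (y + z)) ^ 2 :=
    (sq_mul_le_of_mul_eq_sum_sq hx₀ (by linarith) hxw hw.le h).trans_eq (by ring)
  have hlt : 4 * (x + (y + z)) < x * (y * z) := by
    have : 0 < (x + y + z - w) ^ 2 := pow_pos (by linarith) 2
    refine lt_of_mul_lt_mul_left ?_ hw₀.le
    linear_combination this - h
  have hyz : 5 ≤ y * z := by nlinarith
  have hyz' : y * z ≤ 16 := by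
    refine le_of_mul_le_mul_left ?_ (pow_pos hx₀ 2)
    nlinarith
  refine ⟨hyz', ?_⟩
  have hsum : y + z ≤ y * z + 1 := by nlinarith
  have hsum₀ : 0 < y + z := by linarith
  generalize y * z = q at *
  generalize y + z = s at *
  have hx₁ : (q - 4) * x ^ 2 ≤ 4 * (q + 1) * x + (q + 1) ^ 2 := by
    linear_combination hle + 4 * x * hsum + (q + 1 + s) * hsum
  have hx₂ : (q - 4) * x ^ 2 ≤ (q - 4) * (24 * x + 36) := by nlinarith
  have hx₃ : x ^ 2 ≤ 24 * x + 36 := le_of_mul_le_mul_left hx₂ (by linarith)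
  nlinarith

theorem eq_of_mul_eq_sum_sq {w x y z : ℤ} (hz : 0 < z) (hzy : z ≤ y) (hyx : y ≤ x)
    (hxw : x ≤ w) (hw : w < x + y + z) (h : w * x * y * z = (w + x + y + z) ^ 2) :
    (w, x, y, z) ∈ ({(4, 4, 4, 4), (6, 6, 3, 3), (8, 5, 5, 2), (10, 10, 9, 1)} :
      Finset (ℤ × ℤ × ℤ × ℤ)) := by
  obtain ⟨hyz, hx⟩ := bounds_of_mul_eq_sum_sq hz hzy hyx hxw hw h
  have hle := sq_mul_le_of_mul_eq_sum_sq (by linarith) (by linarith) hxw hw.le h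
  have search : ∀ z ∈ Finset.Icc (1 : ℤ) 4, ∀ y ∈ Finset.Icc z 16, y * z ≤ 16 →
      ∀ x ∈ Finset.Icc y 25, x ^ 2 * (y * z) ≤ (2 * x + y + z) ^ 2 →
        ∀ w ∈ Finset.Ico x (x + y + z), w * x * y * z = (w + x + y + z) ^ 2 →
          (w, x, y, z) ∈ ({(4, 4, 4, 4), (6, 6, 3, 3), (8, 5, 5, 2), (10, 10, 9, 1)} :
            Finset (ℤ × ℤ × ℤ × ℤ)) := by
    decide +kernel
  exact search z (Finset.mem_Icc.2 ⟨hz, by nlinarith⟩) y (Finset.mem_Icc.2 ⟨hzy, by nlinarith⟩) hyz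
    x (Finset.mem_Icc.2 ⟨hyx, hx⟩) hle w (Finset.mem_Ico.2 ⟨hxw, hw⟩) h

theorem sides_of_brahmagupta_of_le {a b c d : ℤ} (hd : 0 < d) (hdc : d ≤ c) (hcb : c ≤ b)
    (hba : b ≤ a)
    (h : (b + c + d - a) * (a + c + d - b) * (a + b + d - c) * (a + b + c - d)
      = 16 * (a + b + c + d) ^ 2) :
    (a, b, c, d) ∈ ({(4, 4, 4, 4), (6, 6, 3, 3), (8, 5, 5, 2), (14, 6, 5, 5)} :
      Finset (ℤ × ℤ × ℤ × ℤ)) := by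
  obtain ⟨s, hs⟩ : Even (a + b + c + d) := by
    have : Even (16 * (a + b + c + d) ^ 2) := (by decide : Even (16 : ℤ)).mul_right _
    rw [← h] at this
    simp only [Int.even_mul, Int.even_sub, Int.even_add] at this ⊢
    tauto
  have hprod : (s - d) * (s - c) * (s - b) * (s - a)
      = ((s - d) + (s - c) + (s - b) + (s - a)) ^ 2 := by
    obtain rfl : d = 2 * s - a - b - c := by linarith
    refine mul_left_cancel₀ (by norm_num : (16 : ℤ) ≠ 0) ?_
    linear_combination h
  have hpos : 0 < s - a := by
    have : 0 < (s - d) * (s - c) * (s - b) * (s - a) := by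
      rw [hprod]
      exact pow_pos (by linarith) 2
    exact pos_of_mul_pos_right this
      (mul_nonneg (mul_nonneg (by linarith) (by linarith)) (by linarith))
  have key := eq_of_mul_eq_sum_sq hpos (by linarith) (by linarith) (by linarith) (by linarith) hprod
  simp only [Finset.mem_insert, Finset.mem_singleton, Prod.mk.injEq] at key ⊢
  rcases key with key | key | key | key
  exacts [.inl (by omega), .inr (.inl (by omega)), .inr (.inr (.inl (by omega))),
    .inr (.inr (.inr (by omega)))]

theorem sides_of_brahmagupta_of_cross {a b c d k l : ℤ} (hb : 0 < b) (hc : 0 < c) (hd : 0 < d)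
    (hba : b ≤ a) (hca : c ≤ a) (hda : d ≤ a)
    (h : (b + c + d - a) * (a + c + d - b) * (a + b + d - c) * (a + b + c - d)
      = 16 * (a + b + c + d) ^ 2)
    (hk : k * (a * b + c * d) = 2 * (a + b + c + d) * (a * b))
    (hl : l * (d * a + b * c) = 2 * (a + b + c + d) * (d * a)) :
    (a, b, c, d) ∈ ({(4, 4, 4, 4), (6, 3, 6, 3), (8, 5, 2, 5), (14, 5, 6, 5)} :
      Finset (ℤ × ℤ × ℤ × ℤ)) := by
  wlog hdb : d ≤ b generalizing b d k l
  · have := this (k := l) (l := k) hd hb hda hba (by linear_combination h)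
      (by linear_combination hl) (by linear_combination hk) (by linarith)
    simp only [Finset.mem_insert, Finset.mem_singleton, Prod.mk.injEq] at this ⊢
    tauto
  let sorted : Finset (ℤ × ℤ × ℤ × ℤ) := {(4, 4, 4, 4), (6, 6, 3, 3), (8, 5, 5, 2), (14, 6, 5, 5)}
  have hsorted : (a, b, d, c) ∈ sorted ∨ (a, b, c, d) ∈ sorted ∨ (a, c, b, d) ∈ sorted := by
    rcases le_total c d with hcd | hdc
    · exact .inl (sides_of_brahmagupta_of_le hc hcd hdb hba (by linear_combination h))
    rcases le_total c b with hcb | hbc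
    · exact .inr (.inl (sides_of_brahmagupta_of_le hd hdc hcb hba h))
    · exact .inr (.inr (sides_of_brahmagupta_of_le hd hdb hbc hca (by linear_combination h)))
  simp only [sorted, Finset.mem_insert, Finset.mem_singleton, Prod.mk.injEq] at hsorted ⊢
  rcases hsorted with (h | h | h | h) | (h | h | h | h) | (h | h | h | h) <;>
    obtain ⟨rfl, rfl, rfl, rfl⟩ := h <;> omega

/-! ### Distances and cross products -/

theorem dist2_nonneg (p q : ℝ × ℝ) : 0 ≤ dist2 p q := Real.sqrt_nonneg _

theorem dist2_sq (p q : ℝ × ℝ) : dist2 p q ^ 2 = (p.1 - q.1) ^ 2 + (p.2 - q.2) ^ 2 :=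
  Real.sq_sqrt (by positivity)

theorem dist2_pos_of_cross_ne_zero {p q r : ℝ × ℝ} (h : cross p q r ≠ 0) : 0 < dist2 p q := by
  refine (dist2_nonneg p q).lt_of_ne' fun h₀ ↦ h ?_
  have hsq := dist2_sq p q
  rw [h₀] at hsq
  have h₁ : p.1 - q.1 = 0 := by nlinarith
  have h₂ : p.2 - q.2 = 0 := by nlinarith
  unfold cross
  linear_combination (p.2 - r.2) * h₁ - (p.1 - r.1) * h₂

theorem cross_rotate (p q r : ℝ × ℝ) : cross q r p = cross p q r := by
  unfold cross; ring

theorem shoelace_rotate (O A B C : ℝ × ℝ) : shoelace A B C O = shoelace O A B C := by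
  unfold shoelace; ring

theorem cross_add_cross_eq_shoelace (O A B C : ℝ × ℝ) :
    cross O A B + cross B C O = shoelace O A B C := by
  unfold cross shoelace; ring

theorem dot2_sq_add_cross_sq (p q r : ℝ × ℝ) :
    dot2 (p - q) (r - q) ^ 2 + cross p q r ^ 2 = (dist2 p q * dist2 q r) ^ 2 := by
  rw [mul_pow, dist2_sq, dist2_sq]
  simp only [dot2, cross, Prod.fst_sub, Prod.snd_sub]
  ring

theorem dist2_sq_eq_sub_dot2 (p q r : ℝ × ℝ) :
    dist2 p r ^ 2 = dist2 p q ^ 2 + dist2 q r ^ 2 - 2 * dot2 (p - q) (r - q) := by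
  simp only [dist2_sq, dot2, Prod.fst_sub, Prod.snd_sub]
  ring

theorem div_sub_mem_Icc_of_mul_neg {x y : ℝ} (h : x * y < 0) : x / (x - y) ∈ Set.Icc 0 1 := by
  rcases mul_neg_iff.1 h with ⟨hx, hy⟩ | ⟨hx, hy⟩
  · exact ⟨by apply div_nonneg <;> linarith, (div_le_one (by linarith)).2 (by linarith)⟩
  · exact ⟨by apply div_nonneg_of_nonpos <;> linarith,
      (div_le_one_of_neg (by linarith)).2 (by linarith)⟩

theorem seg_inter_nonempty_of_cross_mul_cross_neg {p q r s : ℝ × ℝ}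
    (hpq : cross p q r * cross p q s < 0) (hrs : cross r s p * cross r s q < 0) :
    (Seg p q ∩ Seg r s).Nonempty := by
  obtain ⟨ht₀, ht₁⟩ := div_sub_mem_Icc_of_mul_neg hrs
  obtain ⟨hu₀, hu₁⟩ := div_sub_mem_Icc_of_mul_neg hpq
  refine ⟨_, ⟨_, ht₀, ht₁, rfl⟩, ⟨_, hu₀, hu₁, ?_⟩⟩
  have hD : cross p q r - cross p q s = -(cross r s p - cross r s q) := by unfold cross; ring
  have hD₀ : cross r s p - cross r s q ≠ 0 := by
    intro h₀
    rw [sub_eq_zero.1 h₀] at hrs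
    exact absurd hrs (mul_self_nonneg _).not_gt
  rw [hD]
  ext <;>
  · simp only [Prod.fst_add, Prod.snd_add, Prod.smul_fst, Prod.smul_snd, smul_eq_mul]
    field_simp
    unfold cross
    ring

/-! ### Convexity of simple cyclic quadrilaterals -/

/-- The four points lie on a common circle. -/
def Concyclic4 (O A B C : ℝ × ℝ) : Prop :=
  ∃ (P : ℝ × ℝ) (r : ℝ), dist2 P O = r ∧ dist2 P A = r ∧ dist2 P B = r ∧ dist2 P C = r

/-- A cyclic quadrilateral that turns left at each vertex, i.e. a convex cyclic quadrilateral with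
counterclockwise vertices. -/
structure IsConvexCyclic (O A B C : ℝ × ℝ) : Prop where
  concyclic : Concyclic4 O A B C
  cross_OAB_pos : 0 < cross O A B
  cross_ABC_pos : 0 < cross A B C
  cross_BCO_pos : 0 < cross B C O
  cross_COA_pos : 0 < cross C O A

section Quadrilateral

variable {O A B C : ℝ × ℝ}

theorem Concyclic4.rotate (h : Concyclic4 O A B C) : Concyclic4 A B C O := by
  obtain ⟨P, r, hO, hA, hB, hC⟩ := h
  exact ⟨P, r, hA, hB, hC, hO⟩

theorem Concyclic4.cross_mul_dist2_sq (h : Concyclic4 O A B C) :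
    cross O A B * dist2 C O ^ 2 + cross B C O * dist2 O A ^ 2 = cross C O A * dist2 O B ^ 2 := by
  obtain ⟨P, r, hO, hA, hB, hC⟩ := h
  have key {q : ℝ × ℝ} (hq : dist2 P q = r) :
      (P.1 - q.1) ^ 2 + (P.2 - q.2) ^ 2 = (P.1 - O.1) ^ 2 + (P.2 - O.2) ^ 2 := by
    rw [← dist2_sq, ← dist2_sq, hq, hO]
  simp only [dist2_sq]
  unfold cross
  linear_combination ((C.1 - B.1) * (O.2 - B.2) - (C.2 - B.2) * (O.1 - B.1)) * key hA
    + ((A.1 - O.1) * (B.2 - O.2) - (A.2 - O.2) * (B.1 - O.1)) * key hC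
    - ((O.1 - C.1) * (A.2 - C.2) - (O.2 - C.2) * (A.1 - C.1)) * key hB

theorem Concyclic4.cross_COA_pos (h : Concyclic4 O A B C) (hOAB : 0 < cross O A B)
    (hBCO : 0 < cross B C O) : 0 < cross C O A := by
  have hOA := dist2_pos_of_cross_ne_zero hOAB.ne'
  refine pos_of_mul_pos_left ?_ (sq_nonneg (dist2 O B))
  rw [← h.cross_mul_dist2_sq]
  positivity

theorem Concyclic4.isConvexCyclic (h : Concyclic4 O A B C) (hOAB : 0 < cross O A B)
    (hBCO : 0 < cross B C O) : IsConvexCyclic O A B C :=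
  ⟨h, hOAB, h.rotate.rotate.cross_COA_pos hBCO hOAB, hBCO, h.cross_COA_pos hOAB hBCO⟩

theorem IsConvexCyclic.rotate (h : IsConvexCyclic O A B C) : IsConvexCyclic A B C O :=
  ⟨h.concyclic.rotate, h.cross_ABC_pos, h.cross_BCO_pos, h.cross_COA_pos, h.cross_OAB_pos⟩

-- One of the diagonals lies inside the quadrilateral: otherwise two opposite sides would cross.
theorem IsQuad.cross_pos_or_cross_pos (h : IsQuad O A B C) :
    (0 < cross O A B ∧ 0 < cross B C O) ∨ (0 < cross A B C ∧ 0 < cross C O A) := by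
  obtain ⟨⟨hOAB, hABC, hBCO, hCOA, hOA_BC, hAB_CO, -⟩, hpos⟩ := h
  have hOB := cross_add_cross_eq_shoelace O A B C
  have hAC := (cross_add_cross_eq_shoelace A B C O).trans (shoelace_rotate O A B C)
  have hOA : ¬ (cross O A B * cross C O A < 0 ∧ cross B C O * cross A B C < 0) := by
    rw [← cross_rotate C O A, ← cross_rotate A B C]
    exact fun ⟨h₁, h₂⟩ ↦ (seg_inter_nonempty_of_cross_mul_cross_neg h₁ h₂).ne_empty hOA_BC
  have hAB : ¬ (cross A B C * cross O A B < 0 ∧ cross C O A * cross B C O < 0) := by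
    rw [← cross_rotate O A B, ← cross_rotate B C O]
    exact fun ⟨h₁, h₂⟩ ↦ (seg_inter_nonempty_of_cross_mul_cross_neg h₁ h₂).ne_empty hAB_CO
  simp only [mul_neg_iff] at hOA hAB
  rcases lt_or_gt_of_ne hOAB with h₁ | h₁ <;> rcases lt_or_gt_of_ne hABC with h₂ | h₂ <;>
    rcases lt_or_gt_of_ne hBCO with h₃ | h₃ <;> rcases lt_or_gt_of_ne hCOA with h₄ | h₄ <;>
    first | linarith | tauto

theorem IsQuad.isConvexCyclic (h : IsQuad O A B C) (hcyc : Concyclic4 O A B C) :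
    IsConvexCyclic O A B C := by
  rcases h.cross_pos_or_cross_pos with ⟨hOAB, hBCO⟩ | ⟨hABC, hCOA⟩
  · exact hcyc.isConvexCyclic hOAB hBCO
  · exact (hcyc.rotate.isConvexCyclic hABC hCOA).rotate.rotate.rotate

/-! ### Metric relations in a cyclic quadrilateral -/

theorem Concyclic4.dot2_mul_cross (h : Concyclic4 O A B C) :
    dot2 (O - A) (B - A) * cross B C O + dot2 (B - C) (O - C) * cross O A B = 0 := by
  have key := h.cross_mul_dist2_sq
  simp only [dist2_sq] at key
  simp only [cross, dot2, Prod.fst_sub, Prod.snd_sub] at key ⊢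
  linear_combination key

theorem IsConvexCyclic.dist2_pos (h : IsConvexCyclic O A B C) : 0 < dist2 O A :=
  dist2_pos_of_cross_ne_zero h.cross_OAB_pos.ne'

-- Opposite angles have the same sine.
theorem IsConvexCyclic.cross_mul_dist2 (h : IsConvexCyclic O A B C) :
    cross O A B * (dist2 B C * dist2 C O) = cross B C O * (dist2 O A * dist2 A B) := by
  have hOAB := h.cross_OAB_pos
  have hBCO := h.cross_BCO_pos
  have hOA := h.dist2_pos
  have hAB := h.rotate.dist2_pos
  have hBC := h.rotate.rotate.dist2_pos
  have hCO := h.rotate.rotate.rotate.dist2_pos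
  refine (pow_left_inj₀ (by positivity) (by positivity) two_ne_zero).1 ?_
  linear_combination (-cross O A B ^ 2) * dot2_sq_add_cross_sq B C O
    + cross B C O ^ 2 * dot2_sq_add_cross_sq O A B
    + (dot2 (B - C) (O - C) * cross O A B - dot2 (O - A) (B - A) * cross B C O)
      * h.concyclic.dot2_mul_cross

-- Opposite angles have opposite cosines.
theorem IsConvexCyclic.dot2_mul_dist2 (h : IsConvexCyclic O A B C) :
    dot2 (O - A) (B - A) * (dist2 B C * dist2 C O)
      = -(dot2 (B - C) (O - C) * (dist2 O A * dist2 A B)) := by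
  refine mul_left_cancel₀ h.cross_OAB_pos.ne' ?_
  linear_combination dot2 (O - A) (B - A) * h.cross_mul_dist2
    + dist2 O A * dist2 A B * h.concyclic.dot2_mul_cross

theorem IsConvexCyclic.cross_mul_add (h : IsConvexCyclic O A B C) :
    cross O A B * (dist2 O A * dist2 A B + dist2 B C * dist2 C O)
      = shoelace O A B C * (dist2 O A * dist2 A B) := by
  linear_combination h.cross_mul_dist2
    + dist2 O A * dist2 A B * cross_add_cross_eq_shoelace O A B C

theorem IsConvexCyclic.two_mul_dot2_mul_add (h : IsConvexCyclic O A B C) :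
    2 * dot2 (O - A) (B - A) * (dist2 O A * dist2 A B + dist2 B C * dist2 C O)
      = dist2 O A * dist2 A B
        * (dist2 O A ^ 2 + dist2 A B ^ 2 - dist2 B C ^ 2 - dist2 C O ^ 2) := by
  have hOB : dist2 B O ^ 2 = dist2 O B ^ 2 := by simp only [dist2_sq]; ring
  linear_combination 2 * h.dot2_mul_dist2 + dist2 O A * dist2 A B
    * (dist2_sq_eq_sub_dot2 O A B - dist2_sq_eq_sub_dot2 B C O + hOB)

theorem IsConvexCyclic.brahmagupta (h : IsConvexCyclic O A B C) :
    (dist2 A B + dist2 B C + dist2 C O - dist2 O A)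
        * (dist2 O A + dist2 B C + dist2 C O - dist2 A B)
        * (dist2 O A + dist2 A B + dist2 C O - dist2 B C)
        * (dist2 O A + dist2 A B + dist2 B C - dist2 C O)
      = 4 * shoelace O A B C ^ 2 := by
  have hOA := h.dist2_pos
  have hAB := h.rotate.dist2_pos
  refine mul_left_cancel₀ (pow_pos (mul_pos hOA hAB) 2).ne' ?_
  have hcross := congrArg (· ^ 2) h.cross_mul_add
  have hdot := congrArg (· ^ 2) h.two_mul_dot2_mul_add
  linear_combination hdot + 4 * hcross - 4 * (dist2 O A * dist2 A B + dist2 B C * dist2 C O) ^ 2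
    * dot2_sq_add_cross_sq O A B

/-! ### Coordinates along a side -/

/-- Coordinates with origin `O` and first axis along `OA`, oriented like the standard ones. -/
noncomputable def frame (O A p : ℝ × ℝ) : ℝ × ℝ :=
  (dot2 (A - O) (p - O) / dist2 O A, cross O A p / dist2 O A)

theorem frame_isIsometry2 (h : 0 < dist2 O A) : IsIsometry2 (frame O A) := by
  have hsq := dist2_sq O A
  have hsurj (p : ℝ × ℝ) : frame O A
      (O.1 + ((A.1 - O.1) * p.1 - (A.2 - O.2) * p.2) / dist2 O A,
        O.2 + ((A.2 - O.2) * p.1 + (A.1 - O.1) * p.2) / dist2 O A) = p := by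
    ext <;> simp only [frame, dot2, cross, Prod.fst_sub, Prod.snd_sub] <;> field_simp
    · linear_combination (-p.1) * hsq
    · linear_combination (-p.2) * hsq
  have hdist (p q : ℝ × ℝ) : dist2 (frame O A p) (frame O A q) = dist2 p q := by
    refine (pow_left_inj₀ (dist2_nonneg _ _) (dist2_nonneg _ _) two_ne_zero).1 ?_
    rw [dist2_sq, dist2_sq]
    simp only [frame, dot2, cross, Prod.fst_sub, Prod.snd_sub]
    field_simp
    linear_combination (-((p.1 - q.1) ^ 2 + (p.2 - q.2) ^ 2)) * hsq
  refine ⟨⟨fun p q hpq ↦ ?_, fun p ↦ ⟨_, hsurj p⟩⟩, hdist⟩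
  have hzero := dist2_sq p q
  rw [← hdist p q, hpq, dist2_sq, sub_self, sub_self] at hzero
  ext <;> nlinarith

theorem frame_origin : frame O A O = (0, 0) := by
  simp [frame, dot2, cross]

theorem frame_axis : frame O A A = (dist2 O A, 0) := by
  have hdot : dot2 (A - O) (A - O) = dist2 O A * dist2 O A := by
    rw [← sq, dist2_sq, dot2, Prod.fst_sub, Prod.snd_sub]; ring
  have hcross : cross O A A = 0 := by unfold cross; ring
  rw [frame, hdot, hcross, mul_self_div_self, zero_div]

theorem IsConvexCyclic.frame_third (h : IsConvexCyclic O A B C) :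
    frame O A B =
      (dist2 O A - dist2 A B * (dist2 O A ^ 2 + dist2 A B ^ 2 - dist2 B C ^ 2 - dist2 C O ^ 2)
          / (2 * (dist2 O A * dist2 A B + dist2 B C * dist2 C O)),
        shoelace O A B C * dist2 A B / (dist2 O A * dist2 A B + dist2 B C * dist2 C O)) := by
  have hOA := h.dist2_pos
  have hAB := h.rotate.dist2_pos
  have hBC := h.rotate.rotate.dist2_pos
  have hCO := h.rotate.rotate.rotate.dist2_pos
  have hdot : dot2 (A - O) (B - O) = dist2 O A ^ 2 - dot2 (O - A) (B - A) := by
    simp only [dist2_sq, dot2, Prod.fst_sub, Prod.snd_sub]; ring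
  ext <;> simp only [frame, hdot] <;> field_simp
  · linear_combination -h.two_mul_dot2_mul_add
  · linear_combination h.cross_mul_add

theorem IsConvexCyclic.frame_fourth (h : IsConvexCyclic O A B C) :
    frame O A C =
      (dist2 C O * (dist2 C O ^ 2 + dist2 O A ^ 2 - dist2 A B ^ 2 - dist2 B C ^ 2)
          / (2 * (dist2 C O * dist2 O A + dist2 A B * dist2 B C)),
        shoelace O A B C * dist2 C O / (dist2 C O * dist2 O A + dist2 A B * dist2 B C)) := by
  have h' := h.rotate.rotate.rotate
  have hOA := h.dist2_pos
  have hAB := h.rotate.dist2_pos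
  have hBC := h.rotate.rotate.dist2_pos
  have hCO := h'.dist2_pos
  have hdot : dot2 (A - O) (C - O) = dot2 (C - O) (A - O) := by unfold dot2; ring
  ext <;> simp only [frame, hdot, cross_rotate C O A] <;> field_simp
  · linear_combination h'.two_mul_dot2_mul_add
  · linear_combination h'.cross_mul_add - dist2 O A * dist2 C O * shoelace_rotate C O A B

/-! ### Cyclic lattice equable quadrilaterals -/

theorem IsLatticePt.cross_mem_range {p q r : ℝ × ℝ} (hp : IsLatticePt p) (hq : IsLatticePt q)
    (hr : IsLatticePt r) : cross p q r ∈ Set.range ((↑) : ℤ → ℝ) := by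
  obtain ⟨⟨p₁, p₂, rfl⟩, ⟨q₁, q₂, rfl⟩, ⟨r₁, r₂, rfl⟩⟩ := And.intro hp (And.intro hq hr)
  exact ⟨(q₁ - p₁) * (r₂ - p₂) - (q₂ - p₂) * (r₁ - p₁), by push_cast [cross]; rfl⟩

theorem IsLatticePt.dist2_sq_mem_range {p q : ℝ × ℝ} (hp : IsLatticePt p) (hq : IsLatticePt q) :
    dist2 p q ^ 2 ∈ Set.range ((↑) : ℤ → ℝ) := by
  obtain ⟨⟨p₁, p₂, rfl⟩, ⟨q₁, q₂, rfl⟩⟩ := And.intro hp hq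
  exact ⟨(p₁ - q₁) ^ 2 + (p₂ - q₂) ^ 2, by push_cast [dist2_sq]; rfl⟩

/-- A cyclic lattice equable quadrilateral, in the convex form that simplicity implies. -/
structure IsCyclicLEQ (O A B C : ℝ × ℝ) : Prop extends IsConvexCyclic O A B C where
  lattice_O : IsLatticePt O
  lattice_A : IsLatticePt A
  lattice_B : IsLatticePt B
  lattice_C : IsLatticePt C
  shoelace_eq : shoelace O A B C = 2 * quadPerim O A B C

theorem IsCyclicLEQ.rotate (h : IsCyclicLEQ O A B C) : IsCyclicLEQ A B C O where
  toIsConvexCyclic := h.toIsConvexCyclic.rotate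
  lattice_O := h.lattice_A
  lattice_A := h.lattice_B
  lattice_B := h.lattice_C
  lattice_C := h.lattice_O
  shoelace_eq := by rw [shoelace_rotate, h.shoelace_eq]; unfold quadPerim; ring

theorem IsCyclicLEQ.dist2_mem_range (h : IsCyclicLEQ O A B C) :
    dist2 O A ∈ Set.range ((↑) : ℤ → ℝ) := by
  obtain ⟨k, hk⟩ := h.lattice_O.cross_mem_range h.lattice_A h.lattice_B
  obtain ⟨l, hl⟩ := h.lattice_B.cross_mem_range h.lattice_C h.lattice_O
  have hsum : (((k + l) / 2 : ℚ) : ℝ) = ∑ i, ![dist2 O A, dist2 A B, dist2 B C, dist2 C O] i := by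
    have := cross_add_cross_eq_shoelace O A B C
    rw [h.shoelace_eq, ← hk, ← hl, quadPerim] at this
    simp only [Fin.sum_univ_four, Matrix.cons_val]
    push_cast
    linarith
  refine mem_range_intCast_of_sum_mem_range (n := fun _ ↦ 2) (fun _ ↦ two_ne_zero) ?_ ?_
    ⟨_, hsum⟩ 0
  · simp [Fin.forall_fin_succ, dist2_nonneg]
  · simp only [Fin.forall_fin_succ, Matrix.cons_val_zero, Matrix.cons_val_succ, IsEmpty.forall_iff,
      and_true]
    exact ⟨h.lattice_O.dist2_sq_mem_range h.lattice_A, h.lattice_A.dist2_sq_mem_range h.lattice_B,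
      h.lattice_B.dist2_sq_mem_range h.lattice_C, h.lattice_C.dist2_sq_mem_range h.lattice_O⟩

theorem IsCyclicLEQ.sides_of_longest (h : IsCyclicLEQ O A B C) (hAB : dist2 A B ≤ dist2 O A)
    (hBC : dist2 B C ≤ dist2 O A) (hCO : dist2 C O ≤ dist2 O A) :
    (dist2 O A, dist2 A B, dist2 B C, dist2 C O) ∈
      ({(4, 4, 4, 4), (6, 3, 6, 3), (8, 5, 2, 5), (14, 5, 6, 5)} : Set (ℝ × ℝ × ℝ × ℝ)) := by
  have hb := h.rotate.dist2_pos
  have hc := h.rotate.rotate.dist2_pos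
  have hd := h.rotate.rotate.rotate.dist2_pos
  have hbrahm := h.brahmagupta
  have hk := h.cross_mul_add
  have hl := h.rotate.rotate.rotate.cross_mul_add
  rw [h.rotate.rotate.rotate.shoelace_eq] at hl
  rw [h.shoelace_eq] at hbrahm hk
  obtain ⟨a, ha⟩ := h.dist2_mem_range
  obtain ⟨b, hb'⟩ := h.rotate.dist2_mem_range
  obtain ⟨c, hc'⟩ := h.rotate.rotate.dist2_mem_range
  obtain ⟨d, hd'⟩ := h.rotate.rotate.rotate.dist2_mem_range
  obtain ⟨k, hk'⟩ := h.lattice_O.cross_mem_range h.lattice_A h.lattice_B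
  obtain ⟨l, hl'⟩ := h.lattice_C.cross_mem_range h.lattice_O h.lattice_A
  simp only [quadPerim, ← ha, ← hb', ← hc', ← hd', ← hk', ← hl']
    at hAB hBC hCO hb hc hd hbrahm hk hl ⊢
  norm_cast at hAB hBC hCO hb hc hd hbrahm hk hl
  have key := sides_of_brahmagupta_of_cross (k := k) (l := l) hb hc hd hAB hBC hCO
    (by linear_combination hbrahm) hk (by linear_combination hl)
  simp only [Finset.mem_insert, Finset.mem_singleton, Prod.mk.injEq] at key
  simp only [Set.mem_insert_iff, Set.mem_singleton_iff, Prod.mk.injEq]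
  exact_mod_cast key

/-- The four vertex sets of the classification. -/
def IsModel (S : Set (ℝ × ℝ)) : Prop :=
  S = {(0, 0), (4, 0), (4, 4), (0, 4)} ∨ S = {(0, 0), (6, 0), (6, 3), (0, 3)} ∨
    S = {(0, 0), (8, 0), (5, 4), (3, 4)} ∨ S = {(0, 0), (14, 0), (10, 3), (4, 3)}

theorem IsCyclicLEQ.isModel_frame_image (h : IsCyclicLEQ O A B C) (hAB : dist2 A B ≤ dist2 O A)
    (hBC : dist2 B C ≤ dist2 O A) (hCO : dist2 C O ≤ dist2 O A) :
    IsModel (frame O A '' {O, A, B, C}) := by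
  have hsides := h.sides_of_longest hAB hBC hCO
  simp only [Set.mem_insert_iff, Set.mem_singleton_iff, Prod.mk.injEq] at hsides
  simp only [Set.image_insert_eq, Set.image_singleton, frame_origin, frame_axis, h.frame_third,
    h.frame_fourth, h.shoelace_eq, quadPerim]
  rcases hsides with ⟨ha, hb, hc, hd⟩ | ⟨ha, hb, hc, hd⟩ | ⟨ha, hb, hc, hd⟩ | ⟨ha, hb, hc, hd⟩ <;>
    rw [ha, hb, hc, hd]
  · exact .inl (by norm_num)
  · exact .inr (.inl (by norm_num))
  · exact .inr (.inr (.inl (by norm_num)))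
  · exact .inr (.inr (.inr (by norm_num)))

theorem IsCyclicLEQ.exists_isModel_image_of_longest (h : IsCyclicLEQ O A B C)
    (hAB : dist2 A B ≤ dist2 O A) (hBC : dist2 B C ≤ dist2 O A) (hCO : dist2 C O ≤ dist2 O A) :
    ∃ φ, IsIsometry2 φ ∧ IsModel (φ '' {O, A, B, C}) :=
  ⟨frame O A, frame_isIsometry2 h.dist2_pos, h.isModel_frame_image hAB hBC hCO⟩

theorem IsCyclicLEQ.exists_isModel_image (h : IsCyclicLEQ O A B C) :
    ∃ φ, IsIsometry2 φ ∧ IsModel (φ '' {O, A, B, C}) := by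
  have hrot (O A B C : ℝ × ℝ) : ({O, A, B, C} : Set (ℝ × ℝ)) = {A, B, C, O} := by
    ext; simp only [Set.mem_insert_iff, Set.mem_singleton_iff]; tauto
  let side : Fin 4 → ℝ := ![dist2 O A, dist2 A B, dist2 B C, dist2 C O]
  obtain ⟨i, hi⟩ := Finite.exists_max side
  have h₀ := hi 0
  have h₁ := hi 1
  have h₂ := hi 2
  have h₃ := hi 3
  fin_cases i
  · exact h.exists_isModel_image_of_longest h₁ h₂ h₃
  · rw [hrot]
    exact h.rotate.exists_isModel_image_of_longest h₂ h₃ h₀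
  · rw [hrot, hrot]
    exact h.rotate.rotate.exists_isModel_image_of_longest h₃ h₀ h₁
  · rw [hrot, hrot, hrot]
    exact h.rotate.rotate.rotate.exists_isModel_image_of_longest h₀ h₁ h₂

end Quadrilateral

/-- up to isometries of the plane, there are exactly four cyclic
lattice equable quadrilaterals. -/
theorem cyclic_lattice_equable_quadrilaterals (O A B C : ℝ × ℝ)
    (hquad : IsQuad O A B C)
    (hlat : IsLatticePt O ∧ IsLatticePt A ∧ IsLatticePt B ∧ IsLatticePt C)
    (hequable : quadArea O A B C = quadPerim O A B C)
    (hcyclic : ∃ (P : ℝ × ℝ) (r : ℝ),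
      dist2 P O = r ∧ dist2 P A = r ∧ dist2 P B = r ∧ dist2 P C = r) :
    ∃ φ : ℝ × ℝ → ℝ × ℝ, IsIsometry2 φ ∧
      (φ '' {O, A, B, C} =
         ({((0 : ℝ), (0 : ℝ)), ((4 : ℝ), (0 : ℝ)), ((4 : ℝ), (4 : ℝ)), ((0 : ℝ), (4 : ℝ))} :
           Set (ℝ × ℝ)) ∨
       φ '' {O, A, B, C} =
         ({((0 : ℝ), (0 : ℝ)), ((6 : ℝ), (0 : ℝ)), ((6 : ℝ), (3 : ℝ)), ((0 : ℝ), (3 : ℝ))} :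
           Set (ℝ × ℝ)) ∨
       φ '' {O, A, B, C} =
         ({((0 : ℝ), (0 : ℝ)), ((8 : ℝ), (0 : ℝ)), ((5 : ℝ), (4 : ℝ)), ((3 : ℝ), (4 : ℝ))} :
           Set (ℝ × ℝ)) ∨
       φ '' {O, A, B, C} =
         ({((0 : ℝ), (0 : ℝ)), ((14 : ℝ), (0 : ℝ)), ((10 : ℝ), (3 : ℝ)), ((4 : ℝ), (3 : ℝ))} :
           Set (ℝ × ℝ))) := by
  obtain ⟨hO, hA, hB, hC⟩ := hlat
  have hLEQ : IsCyclicLEQ O A B C :=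
    { toIsConvexCyclic := hquad.isConvexCyclic hcyclic
      lattice_O := hO
      lattice_A := hA
      lattice_B := hB
      lattice_C := hC
      shoelace_eq := by
        rw [quadArea, abs_of_pos hquad.2] at hequable
        linarith }
  exact hLEQ.exists_isModel_image
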